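/- arXiv:1703.07147 — 2 statements merged into one kernel-verified Lean document; each statement's English description precedes it below -/
import Mathlib

section
/- Let T be a ℂ-linear triangulated category of finite type and M₁, M₂ objects of T. If M₂ ∈ ⟨M₁⟩ and M₂ ≇ 0, then 0 < δ_{T,t}(M₁, M₂) for every t ∈ ℝ. -/
/-!
Any tower building `M₂ ⊞ N'` from shifts `M₁⟦nᵢ⟧` must use at least one shift with
`Hom(M₂, M₁⟦nᵢ⟧) ≠ 0`: otherwise, by exactness of `Hom(M₂, -)` on each triangle, all the groups
`Hom(M₂, Aᵢ)` vanish, and then the identity of `M₂`, which factors through `M₂ ⊞ N'`, is zero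
(`exists_not_subsingleton_hom`). Finiteness of type leaves only finitely many such shifts `n`, so
every admissible sum is at least the minimum of the finitely many positive numbers `exp (n t)`.
-/

open CategoryTheory Limits Pretriangulated Filter
open scoped ENNReal

universe u v u₂ v₂

namespace CatEntropy

section Defs

variable (C : Type u) [Category.{v} C] [Preadditive C] [HasZeroObject C]
  [HasShift C ℤ] [∀ n : ℤ, (shiftFunctor C n).Additive] [Pretriangulated C]

/-- `C` is of finite type: for all objects `M, N`, the total dimension
`Σ_{n ∈ ℤ} dim_ℂ Hom(M, N⟦n⟧)` is finite. -/
def IsFiniteType [Linear ℂ C] : Prop :=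
  ∀ M N : C, {n : ℤ | ¬ Subsingleton (M ⟶ N⟦n⟧)}.Finite ∧
    ∀ n : ℤ, FiniteDimensional ℂ (M ⟶ N⟦n⟧)

/-- A set of objects is a thick triangulated subcategory: closed under isomorphisms,
shifts, cones and direct summands. -/
structure IsThick (S : Set C) : Prop where
  mem_of_iso : ∀ {X Y : C}, (X ≅ Y) → X ∈ S → Y ∈ S
  shift_mem : ∀ (X : C) (n : ℤ), X ∈ S → X⟦n⟧ ∈ S
  cone_mem : ∀ (T : Triangle C), T ∈ (distTriang C) → T.obj₁ ∈ S → T.obj₂ ∈ S → T.obj₃ ∈ S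
  summand_mem : ∀ (X Y : C), (X ⊞ Y) ∈ S → X ∈ S

/-- `⟨M⟩`, the smallest thick triangulated subcategory containing `M`. -/
def thickClosure (M : C) : Set C :=
  ⋂₀ {S : Set C | IsThick C S ∧ M ∈ S}

/-- `G` is a split-generator of `C` if `⟨G⟩ = C`. -/
def IsSplitGenerator (G : C) : Prop := ∀ X : C, X ∈ thickClosure C G

open Classical in
/-- The complexity `δ_{C,t}(M, N)` of `N` with respect to `M`. -/
noncomputable def complexity (t : ℝ) (M N : C) : ℝ≥0∞ :=
  if IsZero N then 0
  else if N ∈ thickClosure C M then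
    sInf {c : ℝ≥0∞ |
      ∃ (p : ℕ) (_ : 0 < p) (n : Fin p → ℤ) (A : Fin (p + 1) → C) (N' : C),
        IsZero (A 0) ∧ Nonempty (A (Fin.last p) ≅ N ⊞ N') ∧
        (∀ i : Fin p,
          ∃ (f : A i.castSucc ⟶ A i.succ) (g : A i.succ ⟶ M⟦n i⟧)
            (h : M⟦n i⟧ ⟶ (A i.castSucc)⟦(1 : ℤ)⟧),
              Triangle.mk f g h ∈ (distTriang C)) ∧
        c = ∑ i : Fin p, ENNReal.ofReal (Real.exp ((n i : ℝ) * t))}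
  else ⊤

/-- Iterated composition `Fⁿ` of an endofunctor. -/
def iter (F : C ⥤ C) : ℕ → C ⥤ C
  | 0 => 𝟭 C
  | n + 1 => iter F n ⋙ F

/-- The entropy `h_t(F)` of an endofunctor `F`, computed with the split-generator `G`
(the defining limit exists and agrees with the `limsup` used here). -/
noncomputable def entropy (F : C ⥤ C) (G : C) (t : ℝ) : EReal :=
  Filter.atTop.limsup fun m : ℕ =>
    (((m : ℝ)⁻¹ : ℝ) : EReal) * (complexity C t G ((iter C F m).obj G)).log

end Defs


/-- If `X` is a nonzero retract of the last term of a tower over `0` whose successive cones are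
`B i`, then some `B i` receives a nonzero morphism from `X`. -/
lemma exists_not_subsingleton_hom {C : Type u} [Category.{v} C] [Preadditive C] [HasZeroObject C]
    [HasShift C ℤ] [∀ n : ℤ, (shiftFunctor C n).Additive] [Pretriangulated C]
    {X : C} (hX : ¬ IsZero X) {p : ℕ} (A : Fin (p + 1) → C) (B : Fin p → C)
    (hA : IsZero (A 0)) (hr : Nonempty (Retract X (A (Fin.last p))))
    (htri : ∀ i : Fin p, ∃ (f : A i.castSucc ⟶ A i.succ) (g : A i.succ ⟶ B i)
      (h : B i ⟶ (A i.castSucc)⟦(1 : ℤ)⟧), Triangle.mk f g h ∈ (distTriang C)) :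
    ∃ i, ¬ Subsingleton (X ⟶ B i) := by
  by_contra! hB
  have key : ∀ (i : Fin (p + 1)) (φ : X ⟶ A i), φ = 0 := by
    intro i
    induction i using Fin.induction with
    | zero => exact fun φ => hA.eq_of_tgt _ _
    | succ i ih =>
      intro φ
      obtain ⟨f, g, h, hT⟩ := htri i
      obtain ⟨ψ, hψ⟩ := Triangle.coyoneda_exact₂ _ hT φ ((hB i).elim _ _)
      rw [hψ, ih ψ]
      exact zero_comp
  obtain ⟨r⟩ := hr
  apply hX
  rw [IsZero.iff_id_eq_zero, ← r.retract, key _ r.i, zero_comp]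

/-- If `M₂ ∈ ⟨M₁⟩` and `M₂ ≇ 0` then `0 < δ_(T,t)(M₁, M₂)` for all `t`. -/
theorem statement_1 {C : Type u} [Category.{v} C] [Preadditive C] [HasZeroObject C]
    [HasShift C ℤ] [∀ n : ℤ, (shiftFunctor C n).Additive] [Pretriangulated C] [Linear ℂ C]
    (hC : ∃ X : C, ¬ IsZero X) (hft : IsFiniteType C)
    (M₁ M₂ : C) (h₁ : M₂ ∈ thickClosure C M₁) (h₂ : ¬ IsZero M₂) (t : ℝ) :
    0 < complexity C t M₁ M₂ := by
  rw [complexity, if_neg h₂, if_pos h₁]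
  have hS := (hft M₂ M₁).1
  set w : ℤ → ℝ≥0∞ := fun n => ENNReal.ofReal (Real.exp ((n : ℝ) * t))
  -- The infimum is taken in `ℝ≥0∞`, so the value is `⊤` if there are no nonzero morphisms at all.
  have hpos : 0 < hS.toFinset.inf w := by
    rw [Finset.lt_inf_iff ENNReal.zero_lt_top]
    exact fun n _ => ENNReal.ofReal_pos.2 (Real.exp_pos _)
  refine hpos.trans_le (le_sInf ?_)
  rintro c ⟨p, -, n, A, N', hA, ⟨e⟩, htri, rfl⟩
  obtain ⟨i, hi⟩ := exists_not_subsingleton_hom h₂ A (fun i => M₁⟦n i⟧) hA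
    ⟨{ i := biprod.inl ≫ e.inv, r := e.hom ≫ biprod.fst }⟩ htri
  calc hS.toFinset.inf w ≤ w (n i) := Finset.inf_le (hS.mem_toFinset.2 hi)
    _ ≤ ∑ i, w (n i) := Finset.single_le_sum (f := fun i => w (n i))
        (fun _ _ => zero_le) (Finset.mem_univ i)

end CatEntropy
end

section
/- Let T be a ℂ-linear triangulated category of finite type and M₁, M₂, M₃ objects of T with M₂ ≇ 0. Then δ_{T,t}(M₁, M₃) ≤ δ_{T,t}(M₁, M₂) · δ_{T,t}(M₂, M₃) for every t ∈ ℝ (with the usual extended arithmetic on ℝ_{≥0} ∪ {∞}). -/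
/-!
The mathematical heart is the substitution of towers: a tower over `M₂` ending in an object with
summand `M₃`, together with a tower over `M₁` ending in an object with summand `M₂`, gives a tower
over `M₁` ending in an object with summand `M₃`, in which every pair of steps `M₂⟦n⟧`, `M₁⟦m⟧`
contributes a step `M₁⟦m + n⟧` (`Built.flatMap`). Since `exp((m+n)t) = exp(mt) exp(nt)`, its cost is
the product of the two costs. Passing to infima is harmless because the complexity of a nonzero
object is never zero (`sInf_costs_ne_zero`), which excludes the product `0 * ⊤`.

Substitution requires re-bracketing iterated extensions (`Built.append`), usually done with the
octahedral axiom. That axiom is not part of `Pretriangulated`, and is replaced here by a dimension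
count. For triangles `A ⟶ X ⟶ W` and `B ⟶ W ⟶ D`, let `E` be the fibre of `B ⟶ W ⟶ A⟦1⟧`; any
comparison map `E ⟶ X` has a cone `Z` with `dim Hom(P, Z) = dim Hom(P, D)` for all `P`
(`finrank_cone_aux`), and in finite type this forces `Z ≅ D` (`nonempty_iso_of_finrank_eq`), so that
`E ⟶ X ⟶ D` is a triangle (`exists_triangle_comp`).

That the dimensions determine the object is seen as follows. By the long exact sequences and the
vanishing of `Hom(A⟦n⟧, -)` for large `n`, every morphism acts with equal ranks on `Hom(-, Z)` and on
`Hom(-, W)` (`precompRank_eq`). Applied to endomorphisms of `G = Z ⊞ W`, this says that the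
idempotents `e, f` of `R = End G` cutting out `W` and `Z` satisfy `dim e L = dim f L` for all left
ideals `L` of `R`. Modulo the Jacobson radical this forces `e = r (f w e)` for some `r, w`
(`exists_mul_eq_of_finrank`), so `W` is a retract of `Z`, and equality of dimensions makes the
retraction an isomorphism.
-/

open CategoryTheory Limits Pretriangulated Filter
open scoped ENNReal

universe u v u₂ v₂

namespace CatEntropy

/-! ### Linear algebra -/

section Algebra

open Module

/-- A left ideal of a semisimple ring is generated by an idempotent. -/
theorem exists_right_unit_of_semisimple {R : Type*} [Ring R] [IsSemisimpleRing R]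
    (N : Submodule R R) : ∃ ν ∈ N, ∀ x ∈ N, x * ν = x := by
  obtain ⟨N', hc⟩ := exists_isCompl N
  refine ⟨N.projectionOnto N' hc 1, Submodule.coe_mem _, fun x hx => ?_⟩
  have h := congrArg Subtype.val ((N.projectionOnto N' hc).map_smul x 1)
  rw [smul_eq_mul, mul_one, Submodule.coe_smul, smul_eq_mul] at h
  rw [← h, Submodule.projectionOnto_apply_left hc ⟨x, hx⟩]

/-- Choose `w` with `R (f w e)` maximal. If it did not contain `e`, there would be a simple left ideal
`S` of `R e` meeting it trivially. Then `s ↦ f w s` has a nonzero kernel on `e S`, so by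
`dim e S = dim f S` it misses some element of `f S`, and adding that element to `w` enlarges
`R (f w e)`. -/
theorem exists_mul_eq_of_semisimple {K R : Type*} [Field K] [Ring R] [Algebra K R]
    [FiniteDimensional K R] [IsSemisimpleRing R] (e f : R) (he : e * e = e) (hf : f * f = f)
    (hdim : ∀ L : Submodule R R,
      finrank K ((L.restrictScalars K).map (LinearMap.mulLeft K e)) =
      finrank K ((L.restrictScalars K).map (LinearMap.mulLeft K f))) :
    ∃ r w : R, e = r * (f * w * e) := by
  have hne : (Set.range fun w : R => Submodule.span R {f * w * e}).Nonempty := Set.range_nonempty _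
  obtain ⟨_, ⟨w, rfl⟩, hmax⟩ := WellFounded.has_min (wellFounded_gt (α := Submodule R R)) _ hne
  dsimp only at hmax
  by_contra! hcon
  set N := Submodule.span R {f * w * e} with hN
  have heN : e ∉ N := by
    intro h
    obtain ⟨r, hr⟩ := Submodule.mem_span_singleton.1 h
    exact hcon r w hr.symm
  -- an idempotent `ν` generating `N`
  obtain ⟨ν, hνN, hν⟩ := exists_right_unit_of_semisimple N
  have hNe : ∀ x ∈ N, x * e = x := by
    intro x hx
    obtain ⟨r, rfl⟩ := Submodule.mem_span_singleton.1 hx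
    simp only [smul_eq_mul, mul_assoc, he]
  have hne0 : e - e * ν ≠ 0 := by
    intro h
    apply heN
    rw [sub_eq_zero.1 h]
    exact N.smul_mem e hνN
  -- a simple left ideal `S` in `R e` that meets `N` trivially
  obtain ⟨S, hS, hSle⟩ : ∃ S : Submodule R R, IsAtom S ∧ S ≤ Submodule.span R {e - e * ν} := by
    rcases eq_bot_or_exists_atom_le (Submodule.span R {e - e * ν}) with h | h
    · exact absurd (Submodule.span_singleton_eq_bot.1 h) hne0
    · exact h
  have hSe : ∀ s ∈ S, s * e = s := by
    intro s hs
    obtain ⟨r, rfl⟩ := Submodule.mem_span_singleton.1 (hSle hs)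
    simp only [smul_eq_mul, mul_assoc, sub_mul, he, hNe ν hνN]
  have hSν : ∀ s ∈ S, s * ν = 0 := by
    intro s hs
    obtain ⟨r, rfl⟩ := Submodule.mem_span_singleton.1 (hSle hs)
    simp only [smul_eq_mul, mul_assoc, sub_mul, hν ν hνN, sub_self, mul_zero]
  obtain ⟨σ, hσS, hσ⟩ := exists_right_unit_of_semisimple S
  obtain ⟨s₁, hs₁, hs₁0⟩ := S.ne_bot_iff.1 hS.1
  -- the map `e S → f S`, `s ↦ f w s` kills a nonzero `t`
  set t := e * ((1 - ν) * σ) with ht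
  have htS : ((1 - ν) * σ) ∈ S := S.smul_mem _ hσS
  have ht0 : t ≠ 0 := by
    intro h0
    have : s₁ * t = s₁ := by
      rw [ht, ← mul_assoc, hSe _ hs₁, ← mul_assoc, mul_sub, hSν _ hs₁, mul_one, sub_zero,
        hσ _ hs₁]
    rw [h0, mul_zero] at this
    exact hs₁0 this.symm
  have hkill : f * w * t = 0 := by
    have h1 : f * w * e ∈ N := Submodule.mem_span_singleton_self _
    rw [ht, ← mul_assoc, ← mul_assoc, mul_sub, mul_one, hν _ h1, sub_self, zero_mul]
  obtain ⟨s', hs'f, hs'⟩ : ∃ s' ∈ (S.restrictScalars K).map (LinearMap.mulLeft K f),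
      ∀ s ∈ S, f * w * e * s ≠ s' := by
    by_contra! hsurj
    set V := (S.restrictScalars K).map (LinearMap.mulLeft K e)
    set g : V →ₗ[K] R := (LinearMap.mulLeft K (f * w)).domRestrict V
    have hle : (S.restrictScalars K).map (LinearMap.mulLeft K f) ≤ LinearMap.range g := by
      intro x hx
      obtain ⟨s, hs, hsx⟩ := hsurj x hx
      exact ⟨⟨e * s, s, hs, rfl⟩, by simp [g, ← hsx, mul_assoc]⟩
    have h1 := Submodule.finrank_mono hle
    have h2 := g.finrank_range_add_finrank_ker
    have h3 : 0 < finrank K (LinearMap.ker g) := by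
      refine Submodule.one_le_finrank_iff.2 ((Submodule.ne_bot_iff _).2
        ⟨⟨t, _, htS, rfl⟩, by simpa [g, LinearMap.mem_ker, mul_assoc] using hkill, fun h => ?_⟩)
      exact ht0 (congrArg Subtype.val h)
    have h4 : finrank K V = _ := hdim S
    omega
  obtain ⟨s₂, hs₂, rfl⟩ := hs'f
  simp only [LinearMap.mulLeft_apply] at hs'
  have hs'S : f * s₂ ∈ S := S.smul_mem f hs₂
  -- `k` annihilates `f w e` but not the missed element, so the enlarged ideal contains `S`
  obtain ⟨k, hk, hks⟩ : ∃ k, k * (f * w * e) = 0 ∧ k * (f * s₂) ≠ 0 := by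
    by_contra! h
    obtain ⟨ρ, hρ⟩ := Submodule.mem_span_singleton.1 hνN
    rw [smul_eq_mul] at hρ
    have h1 : f * w * e ∈ N := Submodule.mem_span_singleton_self _
    have := h (1 - f * w * e * ρ) (by
      rw [sub_mul, one_mul, mul_assoc _ ρ, hρ, hν _ h1, sub_self])
    rw [sub_mul, one_mul, sub_eq_zero, mul_assoc _ ρ] at this
    exact hs' (ρ * (f * s₂)) (S.smul_mem ρ hs'S) this.symm
  set N' := Submodule.span R {f * (w + f * s₂) * e} with hN'
  have ha : f * (w + f * s₂) * e = f * w * e + f * s₂ := by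
    rw [mul_add, add_mul, ← mul_assoc f f, hf, hSe _ hs'S]
  have haN : f * w * e + f * s₂ ∈ N' := ha ▸ Submodule.mem_span_singleton_self _
  have hSN' : S ≤ N' := by
    have hks' : k * (f * s₂) ∈ S := S.smul_mem k hs'S
    have h1 : Submodule.span R {k * (f * s₂)} = S := by
      refine (hS.le_iff.1 ?_).resolve_left ?_
      · rwa [Submodule.span_singleton_le_iff_mem]
      · exact fun h0 => hks (Submodule.span_singleton_eq_bot.1 h0)
    rw [← h1, Submodule.span_singleton_le_iff_mem]
    have := N'.smul_mem k haN
    rwa [smul_eq_mul, mul_add, hk, zero_add] at this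
  have hNN' : N ≤ N' := by
    rw [hN, Submodule.span_singleton_le_iff_mem]
    simpa using N'.sub_mem haN (hSN' hs'S)
  refine hmax N' ⟨_, rfl⟩ (lt_of_le_of_ne hNN' ?_)
  intro hEq
  have h1 : s₁ ∈ N := hEq ▸ hSN' hs₁
  exact hs₁0 ((hν _ h1).symm.trans (hSν _ hs₁))

/-- Idempotents `e, f` of a finite-dimensional algebra with `dim e L = dim f L` for all left ideals `L`
have `R e` as a retract of `R f`. The semisimple case applies modulo the Jacobson radical, and the
resulting identity lifts because `1 - j` is left invertible for `j` in the radical. -/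
theorem exists_mul_eq_of_finrank {K R : Type*} [Field K] [Ring R] [Algebra K R]
    [FiniteDimensional K R] (e f : R) (he : e * e = e) (hf : f * f = f)
    (hdim : ∀ L : Submodule R R,
      finrank K ((L.restrictScalars K).map (LinearMap.mulLeft K e)) =
      finrank K ((L.restrictScalars K).map (LinearMap.mulLeft K f))) :
    ∃ r w : R, e = r * (f * w * e) := by
  have : IsArtinianRing R := IsArtinianRing.of_finite K R
  set J := Ring.jacobson R with hJ
  have : IsSemisimpleRing (R ⧸ J) := IsSemiprimaryRing.isSemisimpleRing
  let π : R →ₗ[K] R ⧸ J := (Ideal.Quotient.mkₐ K J).toLinearMap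
  have hπ : ∀ x, π x = Ideal.Quotient.mk J x := fun _ => rfl
  have hfin : FiniteDimensional K (R ⧸ J) :=
    Module.Finite.of_surjective π Ideal.Quotient.mk_surjective
  -- `dim g (L / J) + dim g J = dim g L` for idempotent `g` and `L ⊇ J`
  have key : ∀ (g : R), g * g = g → ∀ S : Submodule (R ⧸ J) (R ⧸ J),
      finrank K ((S.restrictScalars K).map (LinearMap.mulLeft K (Ideal.Quotient.mk J g))) +
      finrank K ((Submodule.restrictScalars K (J : Submodule R R)).map (LinearMap.mulLeft K g)) =
      finrank K (((Ideal.comap (Ideal.Quotient.mk J) S : Submodule R R).restrictScalars K).map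
        (LinearMap.mulLeft K g)) := by
    intro g hg S
    set V := (((Ideal.comap (Ideal.Quotient.mk J) S : Submodule R R).restrictScalars K).map
        (LinearMap.mulLeft K g)) with hV
    have h := (π.domRestrict V).finrank_range_add_finrank_ker
    have h1 : LinearMap.range (π.domRestrict V) =
        (S.restrictScalars K).map (LinearMap.mulLeft K (Ideal.Quotient.mk J g)) := by
      ext y
      constructor
      · rintro ⟨⟨_, x, hx, rfl⟩, rfl⟩
        exact ⟨π x, hx, by simp [hπ]⟩
      · rintro ⟨y, hy, rfl⟩
        obtain ⟨x, rfl⟩ := Ideal.Quotient.mk_surjective y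
        exact ⟨⟨g * x, x, hy, rfl⟩, by simp [hπ]⟩
    have h2 : (LinearMap.ker (π.domRestrict V)).map V.subtype =
        (Submodule.restrictScalars K (J : Submodule R R)).map (LinearMap.mulLeft K g) := by
      ext y
      constructor
      · rintro ⟨⟨_, x, hx, rfl⟩, hy, rfl⟩
        have hy' : g * x ∈ J := Ideal.Quotient.eq_zero_iff_mem.1 hy
        exact ⟨g * x, hy', by simp [← mul_assoc, hg]⟩
      · rintro ⟨x, hx, rfl⟩
        have hx0 : Ideal.Quotient.mk J x = 0 := Ideal.Quotient.eq_zero_iff_mem.2 hx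
        refine ⟨⟨g * x, x, ?_, rfl⟩, ?_, rfl⟩
        · change Ideal.Quotient.mk J x ∈ S
          rw [hx0]
          exact S.zero_mem
        · change Ideal.Quotient.mk J (g * x) = 0
          rw [map_mul, hx0, mul_zero]
    rw [← h, h1, ← h2, Submodule.finrank_map_subtype_eq]
  obtain ⟨r, w, h⟩ := exists_mul_eq_of_semisimple (K := K) (Ideal.Quotient.mk J e)
    (Ideal.Quotient.mk J f) (by rw [← map_mul, he]) (by rw [← map_mul, hf]) (fun S => by
      have h1 := key e he S
      have h2 := key f hf S
      have h3 := hdim (Ideal.comap (Ideal.Quotient.mk J) S)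
      have h4 := hdim J
      omega)
  obtain ⟨r, rfl⟩ := Ideal.Quotient.mk_surjective r
  obtain ⟨w, rfl⟩ := Ideal.Quotient.mk_surjective w
  simp only [← map_mul] at h
  rw [Ideal.Quotient.eq] at h
  set j := e - r * (f * w * e) with hj
  obtain ⟨z, hz⟩ := Ideal.mem_jacobson_iff.1 (show j ∈ Ideal.jacobson ⊥ by rwa [Ideal.jacobson_bot]) (-1)
  rw [Submodule.mem_bot] at hz
  have hz1 : z * (1 - j) = 1 := by
    rw [← sub_eq_zero, ← hz]
    noncomm_ring
  refine ⟨z * r, w, ?_⟩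
  have : (1 - j) * e = r * (f * w * e) := by
    rw [hj]
    simp only [sub_mul, one_mul, mul_assoc, he]
    abel
  rw [mul_assoc, ← this, ← mul_assoc, hz1, one_mul]

/-- The dimension count for a morphism of long exact sequences that is the identity on `A`: passing
from `b : B → W` to `φ : E → X` does not change the dimension of the cone. The index `₁` marks the
spaces and maps shifted by one. -/
theorem finrank_cone_aux {K A E B X W A₁ E₁ B₁ X₁ W₁ : Type*} [Field K]
    [AddCommGroup A] [Module K A] [AddCommGroup E] [Module K E] [AddCommGroup B] [Module K B]
    [AddCommGroup X] [Module K X] [AddCommGroup W] [Module K W]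
    [AddCommGroup A₁] [Module K A₁] [AddCommGroup E₁] [Module K E₁] [AddCommGroup B₁] [Module K B₁]
    [AddCommGroup X₁] [Module K X₁] [AddCommGroup W₁] [Module K W₁]
    [FiniteDimensional K X] [FiniteDimensional K W] [FiniteDimensional K B]
    [FiniteDimensional K A₁] [FiniteDimensional K E₁]
    (a : A →ₗ[K] E) (e : E →ₗ[K] B) (i : A →ₗ[K] X) (x : X →ₗ[K] W) (φ : E →ₗ[K] X)
    (b : B →ₗ[K] W) (h : W →ₗ[K] A₁)
    (a₁ : A₁ →ₗ[K] E₁) (e₁ : E₁ →ₗ[K] B₁) (i₁ : A₁ →ₗ[K] X₁) (x₁ : X₁ →ₗ[K] W₁)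
    (φ₁ : E₁ →ₗ[K] X₁) (b₁ : B₁ →ₗ[K] W₁)
    (hφa : φ ∘ₗ a = i) (hxφ : x ∘ₗ φ = b ∘ₗ e) (hφa₁ : φ₁ ∘ₗ a₁ = i₁) (hxφ₁ : x₁ ∘ₗ φ₁ = b₁ ∘ₗ e₁)
    (hB : LinearMap.range e = LinearMap.ker (h ∘ₗ b)) (hX : LinearMap.ker x = LinearMap.range i)
    (hW : LinearMap.range x = LinearMap.ker h) (hA : LinearMap.ker i₁ = LinearMap.range h)
    (hA' : LinearMap.ker a₁ = LinearMap.range (h ∘ₗ b))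
    (hE : LinearMap.ker e₁ = LinearMap.range a₁)
    (hB₁ : LinearMap.ker b₁ ≤ LinearMap.range e₁) (hX₁ : LinearMap.ker x₁ = LinearMap.range i₁) :
    finrank K X + finrank K (LinearMap.ker φ₁) + finrank K (LinearMap.range b) =
      finrank K W + finrank K (LinearMap.ker b₁) + finrank K (LinearMap.range φ) := by
  -- rank of `φ`
  have r1 := (x.domRestrict (LinearMap.range φ)).finrank_range_add_finrank_ker
  have e1 : LinearMap.range (x.domRestrict (LinearMap.range φ)) =
      (LinearMap.range b ⊓ LinearMap.ker h) := by
    ext y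
    constructor
    · rintro ⟨⟨_, q, rfl⟩, rfl⟩
      have hq : x (φ q) = b (e q) := LinearMap.congr_fun hxφ q
      refine ⟨⟨e q, hq.symm⟩, ?_⟩
      rw [SetLike.mem_coe, ← hW]
      exact ⟨φ q, rfl⟩
    · rintro ⟨⟨m, rfl⟩, hm⟩
      obtain ⟨q, rfl⟩ : m ∈ LinearMap.range e := by rw [hB]; exact hm
      exact ⟨⟨φ q, q, rfl⟩, LinearMap.congr_fun hxφ q⟩
  have e2 : (LinearMap.ker (x.domRestrict (LinearMap.range φ))).map (LinearMap.range φ).subtype =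
      LinearMap.ker x := by
    ext y
    constructor
    · rintro ⟨⟨_, _⟩, hy, rfl⟩
      exact hy
    · intro hy
      have hy' := hy
      rw [hX] at hy
      obtain ⟨s, rfl⟩ := hy
      refine ⟨⟨i s, a s, LinearMap.congr_fun hφa s⟩, hy', rfl⟩
  have r2 := x.finrank_range_add_finrank_ker
  have r3 := h.finrank_range_add_finrank_ker
  -- rank of `h ∘ b`
  have r4 := (h.domRestrict (LinearMap.range b)).finrank_range_add_finrank_ker
  have e3 : LinearMap.range (h.domRestrict (LinearMap.range b)) = LinearMap.range (h ∘ₗ b) := by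
    rw [LinearMap.range_domRestrict, LinearMap.range_comp]
  have e4 : (LinearMap.ker (h.domRestrict (LinearMap.range b))).map (LinearMap.range b).subtype =
      LinearMap.range b ⊓ LinearMap.ker h := by
    rw [LinearMap.ker_domRestrict, Submodule.map_comap_subtype]
  -- nullity of `φ₁`
  have r5 := (e₁.domRestrict (LinearMap.ker φ₁)).finrank_range_add_finrank_ker
  have e5 : LinearMap.range (e₁.domRestrict (LinearMap.ker φ₁)) = LinearMap.ker b₁ := by
    ext m
    constructor
    · rintro ⟨⟨q, hq⟩, rfl⟩
      have h1 : x₁ (φ₁ q) = b₁ (e₁ q) := LinearMap.congr_fun hxφ₁ q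
      rw [LinearMap.mem_ker] at hq ⊢
      rw [LinearMap.domRestrict_apply, ← h1, hq, map_zero]
    · intro hm
      obtain ⟨q, rfl⟩ := hB₁ hm
      have h1 : x₁ (φ₁ q) = b₁ (e₁ q) := LinearMap.congr_fun hxφ₁ q
      have h2 : φ₁ q ∈ LinearMap.ker x₁ := by rw [LinearMap.mem_ker, h1]; exact hm
      rw [hX₁] at h2
      obtain ⟨s, hs⟩ := h2
      have h3 : φ₁ (a₁ s) = i₁ s := LinearMap.congr_fun hφa₁ s
      have h4 : e₁ (a₁ s) = 0 := by
        rw [← LinearMap.mem_ker, hE]; exact ⟨s, rfl⟩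
      refine ⟨⟨q - a₁ s, ?_⟩, ?_⟩
      · rw [LinearMap.mem_ker, map_sub, h3, hs, sub_self]
      · rw [LinearMap.domRestrict_apply, map_sub, h4, sub_zero]
  have e6 : (LinearMap.ker (e₁.domRestrict (LinearMap.ker φ₁))).map (LinearMap.ker φ₁).subtype =
      LinearMap.range (a₁.domRestrict (LinearMap.range h)) := by
    ext q
    constructor
    · rintro ⟨⟨q, hq⟩, hq', rfl⟩
      have h1 : q ∈ LinearMap.ker e₁ := hq'
      rw [hE] at h1
      obtain ⟨s, rfl⟩ := h1
      have h3 : φ₁ (a₁ s) = i₁ s := LinearMap.congr_fun hφa₁ s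
      have h2 : s ∈ LinearMap.range h := by
        rw [← hA, LinearMap.mem_ker, ← h3]; exact hq
      exact ⟨⟨s, h2⟩, rfl⟩
    · rintro ⟨⟨s, hs⟩, rfl⟩
      have h3 : φ₁ (a₁ s) = i₁ s := LinearMap.congr_fun hφa₁ s
      refine ⟨⟨a₁ s, ?_⟩, ?_, rfl⟩
      · rw [← hA] at hs
        rw [LinearMap.mem_ker, h3]; exact hs
      · change a₁ s ∈ LinearMap.ker e₁
        rw [hE]; exact ⟨s, rfl⟩
  have r6 := (a₁.domRestrict (LinearMap.range h)).finrank_range_add_finrank_ker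
  have e7 : (LinearMap.ker (a₁.domRestrict (LinearMap.range h))).map (LinearMap.range h).subtype =
      LinearMap.range (h ∘ₗ b) := by
    rw [LinearMap.ker_domRestrict, Submodule.map_comap_subtype, hA', inf_eq_right]
    exact LinearMap.range_comp_le_range _ _
  have f2 := Submodule.finrank_map_subtype_eq _ (LinearMap.ker (x.domRestrict (LinearMap.range φ)))
  have f4 := Submodule.finrank_map_subtype_eq _ (LinearMap.ker (h.domRestrict (LinearMap.range b)))
  have f6 := Submodule.finrank_map_subtype_eq _
    (LinearMap.ker (e₁.domRestrict (LinearMap.ker φ₁)))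
  have f7 := Submodule.finrank_map_subtype_eq _ (LinearMap.ker (a₁.domRestrict (LinearMap.range h)))
  rw [e1] at r1
  rw [e2] at f2
  rw [hW] at r2
  rw [e3] at r4
  rw [e4] at f4
  rw [e5] at r5
  rw [e6] at f6
  rw [e7] at f7
  omega

end Algebra

/-! ### Ranks on morphism spaces -/

section Hom

set_option linter.unusedSectionVars false

open Module

variable {C : Type u} [Category.{v} C] [Preadditive C] [HasZeroObject C]
  [HasShift C ℤ] [∀ n : ℤ, (shiftFunctor C n).Additive] [Pretriangulated C] [Linear ℂ C]

theorem IsFiniteType.finiteDimensional_hom (hft : IsFiniteType C) (M N : C) :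
    FiniteDimensional ℂ (M ⟶ N) := by
  have := (hft M N).2 0
  exact Module.Finite.equiv
    (Linear.homCongr ℂ (Iso.refl M) ((shiftFunctorZero C ℤ).app N))

theorem subsingleton_hom_shift_iff (M N : C) (n : ℤ) :
    Subsingleton (M⟦n⟧ ⟶ N) ↔ Subsingleton (M ⟶ N⟦-n⟧) :=
  ((shiftEquiv C n).toAdjunction.homEquiv M N).subsingleton_congr

theorem IsFiniteType.finite_setOf_hom (hft : IsFiniteType C) (M N : C) :
    {n : ℤ | ¬ Subsingleton (M⟦n⟧ ⟶ N)}.Finite := by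
  refine ((hft M N).1.image (fun n => -n)).subset ?_
  intro n hn
  refine ⟨-n, ?_, neg_neg n⟩
  rwa [Set.mem_ofPred_eq, ← subsingleton_hom_shift_iff]

theorem IsFiniteType.exists_forall_subsingleton (hft : IsFiniteType C) (M N : C) :
    ∃ k : ℕ, ∀ m : ℤ, (k : ℤ) ≤ m → Subsingleton (M⟦m⟧ ⟶ N) := by
  obtain ⟨b, hb⟩ := (hft.finite_setOf_hom M N).bddAbove
  refine ⟨(b + 1).toNat, fun m hm => ?_⟩
  by_contra hcon
  have : m ≤ b := hb hcon
  omega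

/-- The rank of precomposition with `f` on `Hom(-, Z)`. -/
noncomputable def precompRank (Z : C) {A B : C} (f : A ⟶ B) : ℕ :=
  finrank ℂ (LinearMap.range (Linear.leftComp ℂ Z f))

theorem finrank_hom_eq_precompRank_add (hft : IsFiniteType C) (Z : C) (T : Triangle C)
    (hT : T ∈ distTriang C) :
    finrank ℂ (T.obj₂ ⟶ Z) = precompRank Z T.mor₁ + precompRank Z T.mor₂ := by
  have := hft.finiteDimensional_hom T.obj₂ Z
  rw [← (Linear.leftComp ℂ Z T.mor₁).finrank_range_add_finrank_ker, precompRank, precompRank]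
  have : LinearMap.ker (Linear.leftComp ℂ Z T.mor₁) =
      LinearMap.range (Linear.leftComp ℂ Z T.mor₂) := by
    ext f
    constructor
    · intro hf
      obtain ⟨g, hg⟩ := T.yoneda_exact₂ hT f hf
      exact ⟨g, hg.symm⟩
    · rintro ⟨g, rfl⟩
      change T.mor₁ ≫ T.mor₂ ≫ g = 0
      rw [← Category.assoc, comp_distTriang_mor_zero₁₂ T hT, zero_comp]
  rw [this]

theorem precompRank_neg (Z : C) {A B : C} (f : A ⟶ B) :
    precompRank Z (-f) = precompRank Z f := by
  have : Linear.leftComp ℂ Z (-f) = -Linear.leftComp ℂ Z f := by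
    ext g
    simp
  rw [precompRank, this, LinearMap.range_neg, precompRank]

theorem precompRank_eq_aux (hft : IsFiniteType C) (Z W : C)
    (hdim : ∀ P : C, finrank ℂ (P ⟶ Z) = finrank ℂ (P ⟶ W)) (k : ℕ) :
    ∀ {A B : C} (f : A ⟶ B), (∀ m : ℤ, (k : ℤ) ≤ m → Subsingleton (A⟦m⟧ ⟶ Z)) →
      (∀ m : ℤ, (k : ℤ) ≤ m → Subsingleton (A⟦m⟧ ⟶ W)) →
      precompRank Z f = precompRank W f := by
  induction k with
  | zero =>
    intro A B f hZ hW
    have key : ∀ Y : C, Subsingleton (A⟦(0 : ℤ)⟧ ⟶ Y) → precompRank Y f = 0 := by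
      intro Y hY
      have : Subsingleton (A ⟶ Y) :=
        (((shiftFunctorZero C ℤ).app A).homCongr (Iso.refl Y)).subsingleton_congr.1 hY
      exact finrank_zero_of_subsingleton
    rw [key Z (hZ 0 le_rfl), key W (hW 0 le_rfl)]
  | succ k ih =>
    intro A B f hZ hW
    have key : ∀ Y : C, (∀ m : ℤ, ((k + 1 : ℕ) : ℤ) ≤ m → Subsingleton (A⟦m⟧ ⟶ Y)) →
        ∀ m : ℤ, (k : ℤ) ≤ m → Subsingleton (A⟦(1 : ℤ)⟧⟦m⟧ ⟶ Y) := by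
      intro Y hY m hm
      exact (((shiftFunctorAdd' C 1 m (1 + m) rfl).app A).homCongr
        (Iso.refl Y)).subsingleton_congr.1 (hY (1 + m) (by push_cast; omega))
    have h1 := ih (f⟦(1 : ℤ)⟧') (key Z hZ) (key W hW)
    obtain ⟨D, g, h, hT⟩ := distinguished_cocone_triangle f
    have hT₁ := rot_of_distTriang _ hT
    have hT₂ := rot_of_distTriang _ hT₁
    have key : ∀ Y : C, finrank ℂ (B ⟶ Y) = precompRank Y f + precompRank Y g ∧
        finrank ℂ (D ⟶ Y) = precompRank Y g + precompRank Y h ∧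
        finrank ℂ (A⟦(1 : ℤ)⟧ ⟶ Y) = precompRank Y h + precompRank Y (f⟦(1 : ℤ)⟧') := by
      intro Y
      refine ⟨finrank_hom_eq_precompRank_add hft Y _ hT,
        finrank_hom_eq_precompRank_add hft Y _ hT₁, ?_⟩
      rw [← precompRank_neg Y (f⟦(1 : ℤ)⟧')]
      exact finrank_hom_eq_precompRank_add hft Y _ hT₂
    obtain ⟨z0, z1, z2⟩ := key Z
    obtain ⟨w0, w1, w2⟩ := key W
    have d0 := hdim B
    have d1 := hdim D
    have d2 := hdim (A⟦(1 : ℤ)⟧)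
    omega

/-- If `Hom(P, Z)` and `Hom(P, W)` have the same dimension for all `P`, then every morphism acts
with the same rank on `Hom(-, Z)` and on `Hom(-, W)`: the long exact sequences show that the
difference of the ranks is, up to sign, unchanged by a shift of the morphism, and it vanishes for
large shifts. -/
theorem precompRank_eq (hft : IsFiniteType C) {Z W : C}
    (hdim : ∀ P : C, finrank ℂ (P ⟶ Z) = finrank ℂ (P ⟶ W)) {A B : C} (f : A ⟶ B) :
    precompRank Z f = precompRank W f := by
  obtain ⟨k₁, h₁⟩ := hft.exists_forall_subsingleton A Z
  obtain ⟨k₂, h₂⟩ := hft.exists_forall_subsingleton A W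
  exact precompRank_eq_aux hft Z W hdim (max k₁ k₂) f
    (fun m hm => h₁ m (by push_cast at hm; omega)) (fun m hm => h₂ m (by push_cast at hm; omega))

end Hom

/-! ### Objects are determined by the dimensions of their morphism spaces -/

section Hom

set_option linter.unusedSectionVars false

open Module

variable {C : Type u} [Category.{v} C] [Preadditive C] [HasZeroObject C]
  [HasShift C ℤ] [∀ n : ℤ, (shiftFunctor C n).Additive] [Pretriangulated C] [Linear ℂ C]

/-- Products in `End G` are reversed compositions, so a left ideal of `End G` generated by
`s₁, …, sₙ` consists of the morphisms factoring through `(s₁, …, sₙ) : G ⟶ Gⁿ`. -/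
theorem finrank_map_mulLeft_eq_precompRank {G Y : C} {n : ℕ} (s : Fin n → End G) (e : End G)
    (π : G ⟶ Y) (ι : Y ⟶ G) (hι : ι ≫ π = 𝟙 Y) (he : e = π ≫ ι) :
    finrank ℂ (((Submodule.span (End G) (Set.range s)).restrictScalars ℂ).map
      (LinearMap.mulLeft ℂ e)) =
    precompRank Y (biproduct.lift (fun i : Fin n => (s i : G ⟶ G))) := by
  let ρ : (G ⟶ Y) →ₗ[ℂ] End G := Linear.rightComp ℂ G ι
  have hρ : ∀ a, ρ a = a ≫ ι := fun _ => rfl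
  have hinj : Function.Injective ρ := by
    intro a b hab
    have : (a ≫ ι) ≫ π = (b ≫ ι) ≫ π := congrArg (· ≫ π) hab
    simpa [hι] using this
  have hmul : ∀ x : End G, e * x = (x ≫ π) ≫ ι := by
    intro x
    rw [End.mul_def, he, Category.assoc]
  rw [precompRank, (Submodule.equivMapOfInjective ρ hinj _).finrank_eq]
  refine congrArg (fun V : Submodule ℂ (End G) => finrank ℂ V) ?_
  ext x
  constructor
  · rintro ⟨y, hy, rfl⟩
    obtain ⟨c, rfl⟩ := (Submodule.mem_span_range_iff_exists_fun (End G)).1 hy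
    refine ⟨_, ⟨biproduct.desc (fun i => (c i : G ⟶ G)) ≫ π, rfl⟩, ?_⟩
    rw [LinearMap.mulLeft_apply, hmul, hρ]
    congr 1
    change biproduct.lift (fun i : Fin n => (s i : G ⟶ G)) ≫
      biproduct.desc (fun i => (c i : G ⟶ G)) ≫ π = _
    rw [← Category.assoc, biproduct.lift_desc]
    rfl
  · rintro ⟨_, ⟨w, rfl⟩, rfl⟩
    refine ⟨biproduct.lift (fun i : Fin n => (s i : G ⟶ G)) ≫ w ≫ ι, ?_, ?_⟩
    · refine (Submodule.mem_span_range_iff_exists_fun (End G)).2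
        ⟨fun i => biproduct.ι (fun _ : Fin n => G) i ≫ w ≫ ι, ?_⟩
      have : w ≫ ι = biproduct.desc (fun i => biproduct.ι (fun _ : Fin n => G) i ≫ w ≫ ι) := by
        ext i
        simp
      rw [this, biproduct.lift_desc, ← this]
      rfl
    · rw [LinearMap.mulLeft_apply, hmul, hρ]
      simp [hι]

theorem exists_retract_of_finrank_eq (hft : IsFiniteType C) {Z W : C}
    (hdim : ∀ P : C, finrank ℂ (P ⟶ Z) = finrank ℂ (P ⟶ W)) :
    ∃ (s : W ⟶ Z) (r : Z ⟶ W), s ≫ r = 𝟙 W := by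
  let G := Z ⊞ W
  have : FiniteDimensional ℂ (End G) := hft.finiteDimensional_hom G G
  have : IsNoetherianRing (End G) := IsNoetherianRing.of_finite ℂ (End G)
  let e : End G := (biprod.snd : Z ⊞ W ⟶ W) ≫ biprod.inr
  let f : End G := (biprod.fst : Z ⊞ W ⟶ Z) ≫ biprod.inl
  obtain ⟨r, w, h⟩ := exists_mul_eq_of_finrank (K := ℂ) e f
    (by simp [e, End.mul_def]) (by simp [f, End.mul_def]) (fun L => by
      obtain ⟨n, s, rfl⟩ := Submodule.fg_iff_exists_fin_generating_family.1
        (IsNoetherian.noetherian L)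
      rw [finrank_map_mulLeft_eq_precompRank s e _ _ (by simp) rfl,
        finrank_map_mulLeft_eq_precompRank s f _ _ (by simp) rfl, precompRank_eq hft hdim])
  have h' : e = (e ≫ w ≫ f) ≫ r := h
  refine ⟨biprod.inr ≫ w ≫ biprod.fst, biprod.inl ≫ r ≫ biprod.snd, ?_⟩
  have h2 := congrArg (fun q : G ⟶ G => biprod.inr ≫ q ≫ biprod.snd) h'
  simpa [e, f, G] using h2.symm

/-- In finite type, an object is determined up to isomorphism by the dimensions of the morphism
spaces into it. -/
theorem nonempty_iso_of_finrank_eq (hft : IsFiniteType C) {Z W : C}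
    (hdim : ∀ P : C, finrank ℂ (P ⟶ Z) = finrank ℂ (P ⟶ W)) : Nonempty (Z ≅ W) := by
  obtain ⟨s, r, hsr⟩ := exists_retract_of_finrank_eq hft hdim
  have h1 := hft.finiteDimensional_hom Z Z
  have h2 := hft.finiteDimensional_hom Z W
  have hsurj : Function.Surjective (Linear.rightComp ℂ Z r) := fun g =>
    ⟨g ≫ s, by simp [hsr]⟩
  have hinj := (LinearMap.injective_iff_surjective_of_finrank_eq_finrank (hdim Z)).2 hsurj
  exact ⟨⟨r, s, hinj (by simp [hsr]), hsr⟩⟩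

end Hom

/-! ### Re-bracketing of extensions -/

section Triangles

variable {C : Type u} [Category.{v} C] [Preadditive C] [HasZeroObject C]
  [HasShift C ℤ] [∀ n : ℤ, (shiftFunctor C n).Additive] [Pretriangulated C]

theorem exists_fill₂ {X Y Z X' Y' Z' : C} {f : X ⟶ Y} {g : Y ⟶ Z} {h : Z ⟶ X⟦(1 : ℤ)⟧}
    {f' : X' ⟶ Y'} {g' : Y' ⟶ Z'} {h' : Z' ⟶ X'⟦(1 : ℤ)⟧}
    (hT : Triangle.mk f g h ∈ distTriang C) (hT' : Triangle.mk f' g' h' ∈ distTriang C)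
    (a : X ⟶ X') (c : Z ⟶ Z') (hac : h ≫ a⟦(1 : ℤ)⟧' = c ≫ h') :
    ∃ b : Y ⟶ Y', f ≫ b = a ≫ f' ∧ g ≫ c = b ≫ g' :=
  complete_distinguished_triangle_morphism₂ _ _ hT hT' a c hac

theorem distinguished_of_iso {X Y Z X' Y' Z' : C} {f : X ⟶ Y} {g : Y ⟶ Z}
    {h : Z ⟶ X⟦(1 : ℤ)⟧} (hT : Triangle.mk f g h ∈ distTriang C)
    (α : X' ≅ X) (β : Y' ≅ Y) (γ : Z' ≅ Z) :
    Triangle.mk (α.hom ≫ f ≫ β.inv) (β.hom ≫ g ≫ γ.inv) (γ.hom ≫ h ≫ α.inv⟦(1 : ℤ)⟧') ∈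
      distTriang C := by
  refine isomorphic_distinguished _ hT _ (Triangle.isoMk _ _ α β γ ?_ ?_ ?_)
  · change (α.hom ≫ f ≫ β.inv) ≫ β.hom = α.hom ≫ f
    simp
  · change (β.hom ≫ g ≫ γ.inv) ≫ γ.hom = β.hom ≫ g
    simp
  · change (γ.hom ≫ h ≫ α.inv⟦(1 : ℤ)⟧') ≫ α.hom⟦(1 : ℤ)⟧' = γ.hom ≫ h
    simp [← Functor.map_comp]

end Triangles

section Cone

set_option linter.unusedSectionVars false

open Module

variable {C : Type u} [Category.{v} C] [Preadditive C] [HasZeroObject C]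
  [HasShift C ℤ] [∀ n : ℤ, (shiftFunctor C n).Additive] [Pretriangulated C] [Linear ℂ C]

theorem rightComp_neg (P : C) {X Y : C} (f : X ⟶ Y) :
    Linear.rightComp ℂ P (-f) = -Linear.rightComp ℂ P f := by
  ext g
  simp

theorem ker_rightComp_neg (P : C) {X Y : C} (f : X ⟶ Y) :
    LinearMap.ker (Linear.rightComp ℂ P (-f)) = LinearMap.ker (Linear.rightComp ℂ P f) := by
  ext g
  simp

theorem range_rightComp_neg (P : C) {X Y : C} (f : X ⟶ Y) :
    LinearMap.range (Linear.rightComp ℂ P (-f)) = LinearMap.range (Linear.rightComp ℂ P f) := by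
  rw [rightComp_neg, LinearMap.range_neg]

theorem ker_rightComp_mor₂ (P : C) (T : Triangle C) (hT : T ∈ distTriang C) :
    LinearMap.ker (Linear.rightComp ℂ P T.mor₂) =
      LinearMap.range (Linear.rightComp ℂ P T.mor₁) := by
  ext f
  constructor
  · intro hf
    obtain ⟨g, hg⟩ := T.coyoneda_exact₂ hT f hf
    exact ⟨g, hg.symm⟩
  · rintro ⟨g, rfl⟩
    change (g ≫ T.mor₁) ≫ T.mor₂ = 0
    rw [Category.assoc, comp_distTriang_mor_zero₁₂ T hT, comp_zero]

/-- The long exact sequence of `Hom(P, -)` for a distinguished triangle. -/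
theorem homLES (P : C) {X Y Z : C} {f : X ⟶ Y} {g : Y ⟶ Z} {h : Z ⟶ X⟦(1 : ℤ)⟧}
    (hT : Triangle.mk f g h ∈ distTriang C) :
    LinearMap.ker (Linear.rightComp ℂ P g) = LinearMap.range (Linear.rightComp ℂ P f) ∧
    LinearMap.ker (Linear.rightComp ℂ P h) = LinearMap.range (Linear.rightComp ℂ P g) ∧
    LinearMap.ker (Linear.rightComp ℂ P (f⟦(1 : ℤ)⟧')) =
      LinearMap.range (Linear.rightComp ℂ P h) ∧
    LinearMap.ker (Linear.rightComp ℂ P (g⟦(1 : ℤ)⟧')) =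
      LinearMap.range (Linear.rightComp ℂ P (f⟦(1 : ℤ)⟧')) ∧
    LinearMap.ker (Linear.rightComp ℂ P (h⟦(1 : ℤ)⟧')) =
      LinearMap.range (Linear.rightComp ℂ P (g⟦(1 : ℤ)⟧')) := by
  have hT₁ := rot_of_distTriang _ hT
  have hT₂ := rot_of_distTriang _ hT₁
  have hT₃ := rot_of_distTriang _ hT₂
  have hT₄ := rot_of_distTriang _ hT₃
  refine ⟨ker_rightComp_mor₂ P _ hT, ker_rightComp_mor₂ P _ hT₁, ?_, ?_, ?_⟩
  · rw [← ker_rightComp_neg]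
    exact ker_rightComp_mor₂ P _ hT₂
  · rw [← ker_rightComp_neg, ← range_rightComp_neg]
    exact ker_rightComp_mor₂ P _ hT₃
  · rw [← ker_rightComp_neg, ← range_rightComp_neg]
    exact ker_rightComp_mor₂ P _ hT₄

theorem finrank_hom_cone (hft : IsFiniteType C) (P : C) {X Y Z : C} {f : X ⟶ Y} {g : Y ⟶ Z}
    {h : Z ⟶ X⟦(1 : ℤ)⟧} (hT : Triangle.mk f g h ∈ distTriang C) :
    finrank ℂ (P ⟶ Z) + finrank ℂ (LinearMap.range (Linear.rightComp ℂ P f)) =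
      finrank ℂ (P ⟶ Y) + finrank ℂ (LinearMap.ker (Linear.rightComp ℂ P (f⟦(1 : ℤ)⟧'))) := by
  have := hft.finiteDimensional_hom P Z
  have := hft.finiteDimensional_hom P Y
  obtain ⟨h1, h2, h3, -, -⟩ := homLES P hT
  have r1 := (Linear.rightComp ℂ P g).finrank_range_add_finrank_ker
  have r2 := (Linear.rightComp ℂ P h).finrank_range_add_finrank_ker
  rw [h1] at r1
  rw [h2] at r2
  rw [h3]
  omega

/-- A substitute for the octahedral axiom. Given triangles `A ⟶ X ⟶ W` and `B ⟶ W ⟶ D`, let `E` be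
the fibre of `B ⟶ W ⟶ A⟦1⟧`. Any comparison map `E ⟶ X` has a cone whose morphism spaces have the
same dimensions as those of `D`, so this cone is isomorphic to `D`. -/
theorem exists_triangle_comp (hft : IsFiniteType C) {A X W B D : C}
    {i : A ⟶ X} {x : X ⟶ W} {h : W ⟶ A⟦(1 : ℤ)⟧} (hX : Triangle.mk i x h ∈ distTriang C)
    {b : B ⟶ W} {d : W ⟶ D} {k : D ⟶ B⟦(1 : ℤ)⟧} (hW : Triangle.mk b d k ∈ distTriang C) :
    ∃ (E : C) (a : A ⟶ E) (e : E ⟶ B) (φ : E ⟶ X) (ψ : X ⟶ D) (χ : D ⟶ E⟦(1 : ℤ)⟧),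
      Triangle.mk a e (b ≫ h) ∈ distTriang C ∧ Triangle.mk φ ψ χ ∈ distTriang C := by
  obtain ⟨E, a, e, hE⟩ := distinguished_cocone_triangle₂ (b ≫ h)
  obtain ⟨φ, hφ₁, hφ₂⟩ := exists_fill₂ hE hX (𝟙 A) b (by simp)
  obtain ⟨Z, ψ, χ, hZ⟩ := distinguished_cocone_triangle φ
  rw [Category.id_comp] at hφ₁
  have hdim : ∀ P : C, finrank ℂ (P ⟶ Z) = finrank ℂ (P ⟶ D) := by
    intro P
    have := hft.finiteDimensional_hom
    obtain ⟨hX1, hX2, hX3, hX4, -⟩ := homLES P hX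
    obtain ⟨-, hE2, hE3, hE4, hE5⟩ := homLES P hE
    have hbh : Linear.rightComp ℂ P (b ≫ h) =
        Linear.rightComp ℂ P h ∘ₗ Linear.rightComp ℂ P b := by
      ext; simp
    rw [hbh] at hE2 hE3
    have key := finrank_cone_aux
      (Linear.rightComp ℂ P a) (Linear.rightComp ℂ P e) (Linear.rightComp ℂ P i)
      (Linear.rightComp ℂ P x) (Linear.rightComp ℂ P φ) (Linear.rightComp ℂ P b)
      (Linear.rightComp ℂ P h)
      (Linear.rightComp ℂ P (a⟦(1 : ℤ)⟧')) (Linear.rightComp ℂ P (e⟦(1 : ℤ)⟧'))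
      (Linear.rightComp ℂ P (i⟦(1 : ℤ)⟧')) (Linear.rightComp ℂ P (x⟦(1 : ℤ)⟧'))
      (Linear.rightComp ℂ P (φ⟦(1 : ℤ)⟧')) (Linear.rightComp ℂ P (b⟦(1 : ℤ)⟧'))
      (by ext g; simp [← hφ₁]) (by ext g; simp [hφ₂])
      (by ext g; simp [← hφ₁]) (by ext g; simp [← Functor.map_comp, hφ₂])
      hE2.symm hX1 hX2.symm hX3 hE3 hE4
      (by
        rw [← hE5, Functor.map_comp]
        intro g hg
        have hg' : g ≫ b⟦(1 : ℤ)⟧' = 0 := hg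
        change g ≫ b⟦(1 : ℤ)⟧' ≫ h⟦(1 : ℤ)⟧' = 0
        rw [← Category.assoc, hg', zero_comp])
      hX4
    have h1 := finrank_hom_cone hft P hZ
    have h2 := finrank_hom_cone hft P hW
    omega
  obtain ⟨α⟩ := nonempty_iso_of_finrank_eq hft hdim
  exact ⟨E, a, e, φ, _, _, hE, by
    simpa using distinguished_of_iso hZ (Iso.refl _) (Iso.refl _) α.symm⟩

end Cone

/-! ### Towers of extensions -/

section Towers

set_option linter.unusedSectionVars false

variable {C : Type u} [Category.{v} C] [Preadditive C] [HasZeroObject C]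
  [HasShift C ℤ] [∀ n : ℤ, (shiftFunctor C n).Additive] [Pretriangulated C]

/-- There is a distinguished triangle `Y ⟶ X ⟶ W ⟶ Y⟦1⟧`. -/
def IsExtension (Y X W : C) : Prop :=
  ∃ (f : Y ⟶ X) (g : X ⟶ W) (h : W ⟶ Y⟦(1 : ℤ)⟧), Triangle.mk f g h ∈ distTriang C

/-- `X` is obtained from zero by successively attaching shifts `M⟦n⟧`, where `n` runs through the
list from right to left. -/
def Built (M : C) : List ℤ → C → Prop
  | [], X => IsZero X
  | n :: l, X => ∃ Y : C, Built M l Y ∧ IsExtension Y X (M⟦n⟧)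

theorem IsExtension.of_iso {Y X W Y' X' W' : C} (h : IsExtension Y X W) (α : Y' ≅ Y)
    (β : X' ≅ X) (γ : W' ≅ W) : IsExtension Y' X' W' := by
  obtain ⟨f, g, k, hT⟩ := h
  exact ⟨_, _, _, distinguished_of_iso hT α β γ⟩

theorem Built.of_iso {M : C} {l : List ℤ} {X X' : C} (h : Built M l X) (β : X' ≅ X) :
    Built M l X' := by
  cases l with
  | nil => exact IsZero.of_iso h β
  | cons n l =>
    obtain ⟨Y, hY, hX⟩ := h
    exact ⟨Y, hY, hX.of_iso (Iso.refl _) β (Iso.refl _)⟩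

theorem IsExtension.shift {Y X W : C} (h : IsExtension Y X W) (n : ℤ) :
    IsExtension (Y⟦n⟧) (X⟦n⟧) (W⟦n⟧) := by
  obtain ⟨f, g, k, hT⟩ := h
  exact ⟨_, _, _, Triangle.shift_distinguished _ hT n⟩

theorem Built.shift {M : C} {l : List ℤ} {X : C} (h : Built M l X) (n : ℤ) :
    Built M (l.map (· + n)) (X⟦n⟧) := by
  induction l generalizing X with
  | nil => exact (shiftFunctor C n).map_isZero h
  | cons m l ih =>
    obtain ⟨Y, hY, hX⟩ := h
    exact ⟨Y⟦n⟧, ih hY, (hX.shift n).of_iso (Iso.refl _) (Iso.refl _)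
      ((shiftFunctorAdd' C m n (m + n) rfl).app M)⟩

theorem Built.append [Linear ℂ C] (hft : IsFiniteType C) {M : C} {l l' : List ℤ} {A X W : C}
    (hA : Built M l A) (hX : IsExtension A X W) (hW : Built M l' W) : Built M (l' ++ l) X := by
  induction l' generalizing X W with
  | nil =>
    obtain ⟨f, g, k, hT⟩ := hX
    have : IsIso f := (Triangle.isZero₃_iff_isIso₁ _ hT).1 hW
    exact hA.of_iso (asIso f).symm
  | cons n l' ih =>
    obtain ⟨B, hB, b, d, k, hT'⟩ := hW
    obtain ⟨f, g, k, hT⟩ := hX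
    obtain ⟨E, a, e, φ, ψ, χ, hE, hφ⟩ := exists_triangle_comp hft hT hT'
    exact ⟨E, ih ⟨_, _, _, hE⟩ hB, _, _, _, hφ⟩

/-- Retracts of the outer terms of an extension give a retract of the middle term. -/
theorem exists_extension_of_retract {Y A W Y' W' : C} (hA : IsExtension Y A W)
    (s : Y ⟶ Y') (r : Y' ⟶ Y) (hsr : s ≫ r = 𝟙 Y) (σ : W ⟶ W') (ρ : W' ⟶ W)
    (hσρ : σ ≫ ρ = 𝟙 W) :
    ∃ (A' : C) (p : A ⟶ A') (q : A' ⟶ A), p ≫ q = 𝟙 A ∧ IsExtension Y' A' W' := by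
  obtain ⟨f, g, h, hT⟩ := hA
  have hsr' : s⟦(1 : ℤ)⟧' ≫ r⟦(1 : ℤ)⟧' = 𝟙 _ := by rw [← Functor.map_comp, hsr, CategoryTheory.Functor.map_id]
  obtain ⟨A', f', g', hT₂⟩ := distinguished_cocone_triangle₂ (ρ ≫ h ≫ s⟦(1 : ℤ)⟧')
  obtain ⟨p, hp₁, hp₂⟩ := exists_fill₂ hT hT₂ s σ (by rw [← Category.assoc, hσρ, Category.id_comp])
  obtain ⟨q, hq₁, hq₂⟩ := exists_fill₂ hT₂ hT r ρ (by simp [hsr'])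
  let φ : Triangle.mk f g h ⟶ Triangle.mk f g h :=
    { hom₁ := 𝟙 Y
      hom₂ := p ≫ q
      hom₃ := 𝟙 W
      comm₁ := by
        change f ≫ p ≫ q = 𝟙 Y ≫ f
        rw [← Category.assoc, hp₁, Category.assoc, hq₁, ← Category.assoc, hsr]
      comm₂ := by
        change g ≫ 𝟙 W = (p ≫ q) ≫ g
        rw [Category.assoc, ← hq₂, ← Category.assoc, ← hp₂, Category.assoc, hσρ]
      comm₃ := by
        change h ≫ (𝟙 Y)⟦(1 : ℤ)⟧' = 𝟙 W ≫ h
        simp }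
  have hiso : IsIso (p ≫ q) := isIso₂_of_isIso₁₃ φ hT hT
    (inferInstanceAs (IsIso (𝟙 Y))) (inferInstanceAs (IsIso (𝟙 W)))
  exact ⟨A', p, q ≫ inv (p ≫ q), by rw [← Category.assoc, IsIso.hom_inv_id], _, _, _, hT₂⟩

/-- Substitution of towers: if `M₂` is a summand of an object built from `M₁` with shifts `l'`, then
an object built from `M₂` with shifts `l` is a summand of one built from `M₁` with the sums of
shifts from `l` and `l'`. -/
theorem Built.flatMap [Linear ℂ C] (hft : IsFiniteType C) {M₁ M₂ B : C} {l' : List ℤ}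
    (hB : Built M₁ l' B) (s : M₂ ⟶ B) (r : B ⟶ M₂) (hsr : s ≫ r = 𝟙 M₂) {l : List ℤ} {A : C}
    (hA : Built M₂ l A) :
    ∃ (A' : C) (p : A ⟶ A') (q : A' ⟶ A), p ≫ q = 𝟙 A ∧
      Built M₁ (l.flatMap fun n => l'.map (· + n)) A' := by
  induction l generalizing A with
  | nil => exact ⟨A, 𝟙 A, 𝟙 A, Category.comp_id _, hA⟩
  | cons n l ih =>
    obtain ⟨Y, hY, hA⟩ := hA
    obtain ⟨Y', p, q, hpq, hY'⟩ := ih hY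
    obtain ⟨A', p', q', hpq', hA'⟩ := exists_extension_of_retract hA p q hpq (s⟦n⟧') (r⟦n⟧')
      (by rw [← Functor.map_comp, hsr, CategoryTheory.Functor.map_id])
    exact ⟨A', p', q', hpq', hY'.append hft hA' (hB.shift n)⟩

theorem exists_iso_biprod_of_retract {A A' : C} (p : A ⟶ A') (q : A' ⟶ A) (hpq : p ≫ q = 𝟙 A) :
    ∃ N : C, Nonempty (A' ≅ A ⊞ N) := by
  obtain ⟨N, g, h, hT⟩ := distinguished_cocone_triangle p
  have : IsSplitMono p := ⟨⟨⟨q, hpq⟩⟩⟩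
  have h0 : h = 0 := Triangle.mor₃_eq_zero_of_mono₁ _ hT (inferInstanceAs (Mono p))
  obtain ⟨e, -, -⟩ := exists_iso_binaryBiproduct_of_distTriang _ hT h0
  exact ⟨N, ⟨e⟩⟩

theorem Built.eq_zero {M N : C} {l : List ℤ} {X : C} (hX : Built M l X)
    (hl : ∀ n ∈ l, Subsingleton (M⟦n⟧ ⟶ N)) (φ : X ⟶ N) : φ = 0 := by
  induction l generalizing X with
  | nil => exact IsZero.eq_zero_of_src hX φ
  | cons n l ih =>
    obtain ⟨Y, hY, f, g, h, hT⟩ := hX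
    obtain ⟨ψ, hψ⟩ := Triangle.yoneda_exact₂ _ hT φ
      (ih hY (fun m hm => hl m (List.mem_cons_of_mem _ hm)) _)
    have := hl n List.mem_cons_self
    have hψ0 : ψ = 0 := this.elim _ _
    rw [hψ, hψ0]
    exact comp_zero

theorem exists_list_of_tower {M : C} (p : ℕ) (n : Fin p → ℤ) (A : Fin (p + 1) → C)
    (h0 : IsZero (A 0)) (hA : ∀ i : Fin p, IsExtension (A i.castSucc) (A i.succ) (M⟦n i⟧)) :
    ∃ l : List ℤ, Built M l (A (Fin.last p)) ∧
      ∀ w : ℤ → ℝ≥0∞, (l.map w).sum = ∑ i : Fin p, w (n i) := by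
  induction p with
  | zero => exact ⟨[], h0, fun w => by simp⟩
  | succ p ih =>
    obtain ⟨l, hl, hw⟩ := ih (fun i => n i.castSucc) (fun i => A i.castSucc) h0
      (fun i => hA i.castSucc)
    refine ⟨n (Fin.last p) :: l, ⟨_, hl, hA (Fin.last p)⟩, fun w => ?_⟩
    rw [Fin.sum_univ_castSucc, ← hw, List.map_cons, List.sum_cons, add_comm]

theorem exists_tower_of_list {M : C} {l : List ℤ} {X : C} (hX : Built M l X) :
    ∃ (p : ℕ) (n : Fin p → ℤ) (A : Fin (p + 1) → C), IsZero (A 0) ∧ A (Fin.last p) = X ∧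
      (∀ i : Fin p, IsExtension (A i.castSucc) (A i.succ) (M⟦n i⟧)) ∧
      ∀ w : ℤ → ℝ≥0∞, (l.map w).sum = ∑ i : Fin p, w (n i) := by
  induction l generalizing X with
  | nil => exact ⟨0, Fin.elim0, fun _ => X, hX, rfl, fun i => i.elim0, fun w => by simp⟩
  | cons m l ih =>
    obtain ⟨Y, hY, hE⟩ := hX
    obtain ⟨p, n, A, h0, rfl, hA, hw⟩ := ih hY
    refine ⟨p + 1, Fin.snoc (α := fun _ => ℤ) n m, Fin.snoc (α := fun _ => C) A X, ?_, ?_, ?_, ?_⟩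
    · rw [← Fin.castSucc_zero, Fin.snoc_castSucc]
      exact h0
    · rw [Fin.snoc_last]
    · intro i
      induction i using Fin.lastCases with
      | last => simpa only [Fin.succ_last, Fin.snoc_last, Fin.snoc_castSucc] using hE
      | cast i => simpa only [Fin.succ_castSucc, Fin.snoc_castSucc] using hA i
    · intro w
      rw [Fin.sum_univ_castSucc, List.map_cons, List.sum_cons, hw, add_comm]
      simp

end Towers

/-! ### Costs and complexity -/

section Final

variable {C : Type u} [Category.{v} C] [Preadditive C] [HasZeroObject C]
  [HasShift C ℤ] [∀ n : ℤ, (shiftFunctor C n).Additive] [Pretriangulated C]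

/-- The cost `exp(nt)` of attaching one copy of `M⟦n⟧`. -/
noncomputable def weight (t : ℝ) (n : ℤ) : ℝ≥0∞ := ENNReal.ofReal (Real.exp ((n : ℝ) * t))

theorem weight_pos (t : ℝ) (n : ℤ) : 0 < weight t n := ENNReal.ofReal_pos.2 (Real.exp_pos _)

theorem weight_add (t : ℝ) (m n : ℤ) : weight t (m + n) = weight t n * weight t m := by
  rw [weight, weight, weight, ← ENNReal.ofReal_mul (Real.exp_pos _).le, ← Real.exp_add]
  congr 2
  push_cast
  ring

theorem sum_weight_flatMap (t : ℝ) (l l' : List ℤ) :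
    ((l.flatMap fun n => l'.map (· + n)).map (weight t)).sum =
      (l'.map (weight t)).sum * (l.map (weight t)).sum := by
  have key : ∀ n : ℤ, ((l'.map (· + n)).map (weight t)).sum =
      (l'.map (weight t)).sum * weight t n := by
    intro n
    induction l' with
    | nil => simp
    | cons m l' ih =>
      simp only [List.map_cons, List.sum_cons] at ih ⊢
      rw [ih, weight_add, add_mul, mul_comm (weight t n)]
  induction l with
  | nil => simp
  | cons n l ih =>
    rw [List.flatMap_cons, List.map_append, List.sum_append, ih, key, List.map_cons, List.sum_cons,
      mul_add]

/-- The costs of the towers over `M` that end in an object having `N` as a direct summand. -/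
def costs (t : ℝ) (M N : C) : Set ℝ≥0∞ :=
  {c | ∃ (l : List ℤ) (X N' : C), Built M l X ∧ Nonempty (X ≅ N ⊞ N') ∧
    c = (l.map (weight t)).sum}

theorem complexity_eq_sInf_costs (t : ℝ) {M N : C} (hN : ¬ IsZero N)
    (hM : N ∈ thickClosure C M) : complexity C t M N = sInf (costs t M N) := by
  rw [complexity, if_neg hN, if_pos hM]
  congr 1
  ext c
  constructor
  · rintro ⟨p, -, n, A, N', h0, hN', hA, rfl⟩
    obtain ⟨l, hl, hw⟩ := exists_list_of_tower p n A h0 hA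
    exact ⟨l, _, N', hl, hN', (hw (weight t)).symm⟩
  · rintro ⟨l, X, N', hX, ⟨e⟩, rfl⟩
    obtain ⟨p, n, A, h0, rfl, hA, hw⟩ := exists_tower_of_list hX
    refine ⟨p, Nat.pos_of_ne_zero ?_, n, A, N', h0, ⟨e⟩, hA, hw (weight t)⟩
    -- a tower of length zero ends in a zero object, whose summand `N` would be zero
    rintro rfl
    apply hN
    rw [IsZero.iff_id_eq_zero, ← biprod.inl_fst (X := N) (Y := N'),
      (IsZero.of_iso h0 e.symm).eq_zero_of_tgt biprod.inl, zero_comp]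

/-- Every tower reaching a nonzero `N` uses some `M⟦n⟧` with `Hom(M⟦n⟧, N) ≠ 0`, and in finite type
there are only finitely many such `n`. -/
theorem sInf_costs_ne_zero [Linear ℂ C] (hft : IsFiniteType C) (t : ℝ) {M N : C}
    (hN : ¬ IsZero N) : sInf (costs t M N) ≠ 0 := by
  set F := (hft.finite_setOf_hom M N).toFinset with hF
  have hpos : 0 < F.inf (weight t) :=
    (Finset.lt_inf_iff (by simp)).2 fun n _ => weight_pos t n
  refine (hpos.trans_le (le_sInf ?_)).ne'
  rintro _ ⟨l, X, N', hX, ⟨e⟩, rfl⟩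
  obtain ⟨n, hn, hns⟩ : ∃ n ∈ l, ¬ Subsingleton (M⟦n⟧ ⟶ N) := by
    by_contra! hcon
    apply hN
    have h0 := hX.eq_zero hcon (e.hom ≫ biprod.fst)
    have h1 : biprod.inl ≫ e.inv ≫ e.hom ≫ biprod.fst = 𝟙 N := by simp
    rw [IsZero.iff_id_eq_zero, ← h1, h0, comp_zero, comp_zero]
  have hnF : n ∈ F := by simpa [hF] using hns
  exact (Finset.inf_le hnF).trans
    (List.single_le_sum (by simp) _ (List.mem_map_of_mem hn))

theorem sInf_costs_le [Linear ℂ C] (hft : IsFiniteType C) (t : ℝ) {M₁ M₂ M₃ : C}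
    {c₁ c₂ : ℝ≥0∞} (h₁ : c₁ ∈ costs t M₁ M₂) (h₂ : c₂ ∈ costs t M₂ M₃) :
    sInf (costs t M₁ M₃) ≤ c₁ * c₂ := by
  obtain ⟨l₁, X₁, N₁, hX₁, ⟨e₁⟩, rfl⟩ := h₁
  obtain ⟨l₂, X₂, N₂, hX₂, ⟨e₂⟩, rfl⟩ := h₂
  obtain ⟨A, p, q, hpq, hA⟩ := hX₁.flatMap hft (biprod.inl ≫ e₁.inv) (e₁.hom ≫ biprod.fst)
    (by simp) hX₂
  obtain ⟨N, e⟩ := exists_iso_biprod_of_retract (biprod.inl ≫ e₂.inv ≫ p)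
    (q ≫ e₂.hom ≫ biprod.fst) (by simp [reassoc_of% hpq])
  exact sInf_le ⟨_, A, N, hA, e, (sum_weight_flatMap t l₂ l₁).symm⟩

theorem thickClosure_trans {M₁ M₂ M₃ : C} (h₁ : M₂ ∈ thickClosure C M₁)
    (h₂ : M₃ ∈ thickClosure C M₂) : M₃ ∈ thickClosure C M₁ :=
  fun S hS => h₂ S ⟨hS.1, h₁ S hS⟩

theorem complexity_ne_zero [Linear ℂ C] (hft : IsFiniteType C) (t : ℝ) {M N : C}
    (hN : ¬ IsZero N) : complexity C t M N ≠ 0 := by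
  by_cases hM : N ∈ thickClosure C M
  · rw [complexity_eq_sInf_costs t hN hM]
    exact sInf_costs_ne_zero hft t hN
  · rw [complexity, if_neg hN, if_neg hM]
    exact ENNReal.top_ne_zero

/-- The infimum of products is the product of infima, unless this product is `0 * ⊤`. -/
theorem le_sInf_mul_sInf {a : ℝ≥0∞} {S T : Set ℝ≥0∞} (hS : sInf S ≠ 0) (hT : sInf T ≠ 0)
    (h : ∀ x ∈ S, ∀ y ∈ T, a ≤ x * y) : a ≤ sInf S * sInf T := by
  by_cases hS' : sInf S = ⊤
  · rw [hS', ENNReal.top_mul hT]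
    exact le_top
  by_cases hT' : sInf T = ⊤
  · rw [hT', ENNReal.mul_top hS]
    exact le_top
  rw [sInf_eq_top] at hS' hT'
  push Not at hS' hT'
  obtain ⟨x, hx, hx'⟩ := hS'
  obtain ⟨y, hy, hy'⟩ := hT'
  rw [sInf_eq_iInf', sInf_eq_iInf']
  exact ENNReal.le_iInf_mul_iInf ⟨⟨x, hx⟩, hx'⟩ ⟨⟨y, hy⟩, hy'⟩ fun i j => h i i.2 j j.2

end Final

/-- Subadditivity of complexity: if `M₂ ≇ 0` then
`δ_(T,t)(M₁, M₃) ≤ δ_(T,t)(M₁, M₂) · δ_(T,t)(M₂, M₃)`. -/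
theorem statement_3 {C : Type u} [Category.{v} C] [Preadditive C] [HasZeroObject C]
    [HasShift C ℤ] [∀ n : ℤ, (shiftFunctor C n).Additive] [Pretriangulated C] [Linear ℂ C]
    (hC : ∃ X : C, ¬ IsZero X) (hft : IsFiniteType C)
    (M₁ M₂ M₃ : C) (h : ¬ IsZero M₂) (t : ℝ) :
    complexity C t M₁ M₃ ≤ complexity C t M₁ M₂ * complexity C t M₂ M₃ := by
  by_cases h₃ : IsZero M₃
  · rw [complexity, if_pos h₃]
    exact zero_le
  by_cases h₁₂ : M₂ ∈ thickClosure C M₁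
  · by_cases h₂₃ : M₃ ∈ thickClosure C M₂
    · rw [complexity_eq_sInf_costs t h₃ (thickClosure_trans h₁₂ h₂₃),
        complexity_eq_sInf_costs t h h₁₂, complexity_eq_sInf_costs t h₃ h₂₃]
      exact le_sInf_mul_sInf (sInf_costs_ne_zero hft t h) (sInf_costs_ne_zero hft t h₃)
        fun x hx y hy => sInf_costs_le hft t hx hy
    · have h_top : complexity C t M₂ M₃ = ⊤ := by rw [complexity, if_neg h₃, if_neg h₂₃]
      rw [h_top, ENNReal.mul_top (complexity_ne_zero hft t h)]
      exact le_top
  · have h_top : complexity C t M₁ M₂ = ⊤ := by rw [complexity, if_neg h, if_neg h₁₂]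
    rw [h_top, ENNReal.top_mul (complexity_ne_zero hft t h₃)]
    exact le_top

end CatEntropy
end
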